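/- arXiv:2205.08532 — 2 statements merged into one kernel-verified Lean document; each statement's English description precedes it below -/
import Mathlib

section
/- (Fingerprinting lemma for exponential families, single coordinate.) Fix j ∈ [k] and fix all coordinates η_{−j} of the natural parameter. Suppose the interval I_j = [η⁽¹⁾_j, η⁽²⁾_j] is non-degenerate and η_j ∼ Uniform(I_j). Then for every measurable function f_j : S^n → [−R_j/2, R_j/2] applied to a dataset X = (X₁,…,X_n) ∼ p_η^{⊗n}, one has E_{η_j, X}[ Z^j + (f_j(X) − (η_j − m_j))² ] ≥ R_j²/12, where Z^j = [R_j²/4 − (η_j − m_j)²]·[f_j(X) − (η_j − m_j)]·Σ_{i=1}^n (T_j(X_i) − μ_{T,j}). -/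
open MeasureTheory Matrix Set

noncomputable section

/-- The log-partition function of the exponential family `ℰ(T, h)` on `S ⊆ ℝ^d`:
`Z(η) = ln ∫_S h(x)·exp(η^⊤ T(x)) dx`. -/
def logPartition {d k : ℕ} (S : Set (Fin d → ℝ)) (h : (Fin d → ℝ) → ℝ)
    (T : (Fin d → ℝ) → Fin k → ℝ) (η : Fin k → ℝ) : ℝ :=
  Real.log (∫ x in S, h x * Real.exp (η ⬝ᵥ T x))

/-- The member `p_η` of the exponential family `ℰ(T, h)` on `S ⊆ ℝ^d`, with Lebesgue
density `x ↦ h(x)·exp(η^⊤ T(x) − Z(η))` on `S` (and `0` off `S`). -/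
def expFam {d k : ℕ} (S : Set (Fin d → ℝ)) (h : (Fin d → ℝ) → ℝ)
    (T : (Fin d → ℝ) → Fin k → ℝ) (η : Fin k → ℝ) : Measure (Fin d → ℝ) :=
  volume.withDensity fun x =>
    ENNReal.ofReal (S.indicator (fun y => h y * Real.exp (η ⬝ᵥ T y - logPartition S h T η)) x)

/-- `μ_T = E_{X ∼ p_η}[T(X)]`, the mean of the sufficient statistics. -/
def suffMean {d k : ℕ} (S : Set (Fin d → ℝ)) (h : (Fin d → ℝ) → ℝ)
    (T : (Fin d → ℝ) → Fin k → ℝ) (η : Fin k → ℝ) : Fin k → ℝ :=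
  fun j => ∫ x, T x j ∂(expFam S h T η)

/-- `Σ_T = Cov_{X ∼ p_η}(T(X))`, the covariance matrix of the sufficient statistics. -/
def suffCov {d k : ℕ} (S : Set (Fin d → ℝ)) (h : (Fin d → ℝ) → ℝ)
    (T : (Fin d → ℝ) → Fin k → ℝ) (η : Fin k → ℝ) : Matrix (Fin k) (Fin k) ℝ :=
  Matrix.of fun j₁ j₂ =>
    ∫ x, (T x j₁ - suffMean S h T η j₁) * (T x j₂ - suffMean S h T η j₂) ∂(expFam S h T η)

/-- The uniform probability measure on the interval `[a, b]`. -/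
def unif (a b : ℝ) : Measure ℝ :=
  (ENNReal.ofReal (b - a))⁻¹ • volume.restrict (Set.Icc a b)


lemma fp_exp_bound {a b t : ℝ} (ht : t ∈ Icc a b) (y : ℝ) :
    Real.exp ((t - a) * y) ≤ 1 + Real.exp ((b - a) * y) := by
  rcases le_total 0 y with hy | hy
  · have : Real.exp ((t - a) * y) ≤ Real.exp ((b - a) * y) := by
      apply Real.exp_le_exp.2
      exact mul_le_mul_of_nonneg_right (by linarith [ht.2]) hy
    linarith
  · have : Real.exp ((t - a) * y) ≤ 1 := by
      apply Real.exp_le_one_iff.2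
      exact mul_nonpos_of_nonneg_of_nonpos (by linarith [ht.1]) hy
    linarith [Real.exp_pos ((b - a) * y)]

lemma fp_bound_integrable {Ω : Type*} [MeasurableSpace Ω] (Q : Measure Ω)
    (Y : Ω → ℝ) (a b : ℝ) (g : Ω → ℝ)
    (h1 : Integrable g Q) (h2 : Integrable (fun ω => g ω * Real.exp ((b - a) * Y ω)) Q) :
    Integrable (fun ω => |g ω| * (1 + Real.exp ((b - a) * Y ω))) Q := by
  refine (h1.abs.add h2.abs).congr ?_
  filter_upwards with ω
  simp only [Pi.add_apply, abs_mul, abs_of_pos (Real.exp_pos _)]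
  ring

lemma fp_cont {Ω : Type*} [MeasurableSpace Ω] (Q : Measure Ω)
    (Y : Ω → ℝ) (hY : Measurable Y) (a b : ℝ) (g : Ω → ℝ) (hg : Measurable g)
    (h1 : Integrable g Q) (h2 : Integrable (fun ω => g ω * Real.exp ((b - a) * Y ω)) Q) :
    ContinuousOn (fun t => ∫ ω, g ω * Real.exp ((t - a) * Y ω) ∂Q) (Icc a b) := by
  refine continuousOn_of_dominated (bound := fun ω => |g ω| * (1 + Real.exp ((b - a) * Y ω)))
    ?_ ?_ (fp_bound_integrable Q Y a b g h1 h2) ?_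
  · intro t _
    exact Measurable.aestronglyMeasurable (by fun_prop)
  · intro t ht
    filter_upwards with ω
    rw [Real.norm_eq_abs, abs_mul, abs_of_pos (Real.exp_pos _)]
    exact mul_le_mul_of_nonneg_left (fp_exp_bound ht _) (abs_nonneg _)
  · filter_upwards with ω
    fun_prop

lemma fp_int {Ω : Type*} [MeasurableSpace Ω] (Q : Measure Ω)
    (Y : Ω → ℝ) (hY : Measurable Y) (a b : ℝ) (g : Ω → ℝ) (hg : Measurable g)
    (h1 : Integrable g Q) (h2 : Integrable (fun ω => g ω * Real.exp ((b - a) * Y ω)) Q)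
    {t : ℝ} (ht : t ∈ Icc a b) :
    Integrable (fun ω => g ω * Real.exp ((t - a) * Y ω)) Q := by
  refine (fp_bound_integrable Q Y a b g h1 h2).mono' 
    (Measurable.aestronglyMeasurable (by fun_prop)) ?_
  filter_upwards with ω
  rw [Real.norm_eq_abs, abs_mul, abs_of_pos (Real.exp_pos _)]
  exact mul_le_mul_of_nonneg_left (fp_exp_bound ht _) (abs_nonneg _)

lemma fp_deriv {Ω : Type*} [MeasurableSpace Ω] (Q : Measure Ω)
    (Y : Ω → ℝ) (hY : Measurable Y) (a b : ℝ) (g : Ω → ℝ) (hg : Measurable g)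
    (h1 : Integrable g Q) (h2 : Integrable (fun ω => g ω * Real.exp ((b - a) * Y ω)) Q)
    (h3 : Integrable (fun ω => g ω * Y ω) Q)
    (h4 : Integrable (fun ω => g ω * Y ω * Real.exp ((b - a) * Y ω)) Q)
    {t : ℝ} (ht : t ∈ Ioo a b) :
    HasDerivAt (fun t => ∫ ω, g ω * Real.exp ((t - a) * Y ω) ∂Q)
      (∫ ω, g ω * Y ω * Real.exp ((t - a) * Y ω) ∂Q) t := by
  refine (hasDerivAt_integral_of_dominated_loc_of_deriv_le (s := Icc a b)
    (bound := fun ω => |g ω * Y ω| * (1 + Real.exp ((b - a) * Y ω)))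
    (F' := fun t ω => g ω * Y ω * Real.exp ((t - a) * Y ω))
    (Icc_mem_nhds ht.1 ht.2) ?_ ?_ ?_ ?_ (fp_bound_integrable Q Y a b _ h3 h4) ?_).2
  · filter_upwards with s
    exact Measurable.aestronglyMeasurable (by fun_prop)
  · exact fp_int Q Y hY a b g hg h1 h2 (Ioo_subset_Icc_self ht)
  · exact Measurable.aestronglyMeasurable (by fun_prop)
  · filter_upwards with ω s hs
    rw [Real.norm_eq_abs, abs_mul, abs_of_pos (Real.exp_pos _)]
    exact mul_le_mul_of_nonneg_left (fp_exp_bound hs _) (abs_nonneg _)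
  · filter_upwards with ω s hs
    have := ((((hasDerivAt_id s).sub_const a).mul_const (Y ω)).exp).const_mul (g ω)
    refine HasDerivAt.congr_deriv this ?_
    simp only [id]
    ring

lemma fp_core {Ω : Type*} [MeasurableSpace Ω] (Q : Measure Ω) [IsProbabilityMeasure Q]
    (Y : Ω → ℝ) (hY : Measurable Y) (a b : ℝ) (hab : a < b) (f : Ω → ℝ) (hf : Measurable f)
    (hrange : ∀ ω, |f ω| ≤ (b - a) / 2) (c : ℝ → ℝ)
    (hc : ∀ t ∈ Icc a b, ∫ ω, Real.exp ((t - a) * Y ω - c t) ∂Q = 1)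
    (h2 : Integrable (fun ω => Real.exp ((b - a) * Y ω)) Q)
    (h3 : Integrable Y Q)
    (h4 : Integrable (fun ω => Y ω * Real.exp ((b - a) * Y ω)) Q) :
    (b - a) ^ 3 / 12 ≤ ∫ t in a..b, ∫ ω,
      Real.exp ((t - a) * Y ω - c t) *
        (((b - a) ^ 2 / 4 - (t - (a + b) / 2) ^ 2) * (f ω - (t - (a + b) / 2)) *
          (Y ω - ∫ ω', Real.exp ((t - a) * Y ω' - c t) * Y ω' ∂Q)
          + (f ω - (t - (a + b) / 2)) ^ 2) ∂Q := by
  -- bounded functions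
  have bdd : ∀ (g : Ω → ℝ), Measurable g → (∃ C, ∀ ω, |g ω| ≤ C) →
      Integrable g Q ∧ Integrable (fun ω => g ω * Real.exp ((b - a) * Y ω)) Q ∧
      Integrable (fun ω => g ω * Y ω) Q ∧
      Integrable (fun ω => g ω * Y ω * Real.exp ((b - a) * Y ω)) Q := by
    rintro g hg ⟨C, hC⟩
    have hb : ∀ᵐ ω ∂Q, ‖g ω‖ ≤ C := by filter_upwards with ω; exact hC ω
    refine ⟨Integrable.of_bound hg.aestronglyMeasurable C hb,
      h2.bdd_mul hg.aestronglyMeasurable hb, h3.bdd_mul hg.aestronglyMeasurable hb, ?_⟩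
    simp only [mul_assoc]
    exact h4.bdd_mul hg.aestronglyMeasurable hb
  obtain ⟨f1, f2, f3, f4⟩ := bdd f hf ⟨_, hrange⟩
  obtain ⟨o1, o2, o3, o4⟩ := bdd (fun _ => 1) measurable_const ⟨1, by simp⟩
  obtain ⟨q1, q2, q3, q4⟩ := bdd (fun ω => f ω ^ 2) (by fun_prop) ⟨((b - a) / 2) ^ 2, fun ω => by
    rw [abs_pow]; exact pow_le_pow_left₀ (abs_nonneg _) (hrange ω) 2⟩
  set M : ℝ → ℝ := fun t => ∫ ω, 1 * Real.exp ((t - a) * Y ω) ∂Q with hM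
  set M1 : ℝ → ℝ := fun t => ∫ ω, 1 * Y ω * Real.exp ((t - a) * Y ω) ∂Q with hM1
  set N : ℝ → ℝ := fun t => ∫ ω, f ω * Real.exp ((t - a) * Y ω) ∂Q with hN
  set N1 : ℝ → ℝ := fun t => ∫ ω, f ω * Y ω * Real.exp ((t - a) * Y ω) ∂Q with hN1
  set W : ℝ → ℝ := fun t => ∫ ω, f ω ^ 2 * Real.exp ((t - a) * Y ω) ∂Q with hW
  have cM : ContinuousOn M (Icc a b) := fp_cont Q Y hY a b _ measurable_const o1 o2
  have cM1 : ContinuousOn M1 (Icc a b) := fp_cont Q Y hY a b _ (by fun_prop) o3 o4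
  have cN : ContinuousOn N (Icc a b) := fp_cont Q Y hY a b _ hf f1 f2
  have cN1 : ContinuousOn N1 (Icc a b) := fp_cont Q Y hY a b _ (by fun_prop) f3 f4
  have cW : ContinuousOn W (Icc a b) := fp_cont Q Y hY a b _ (by fun_prop) q1 q2
  have dM : ∀ t ∈ Ioo a b, HasDerivAt M (M1 t) t := fun t ht =>
    fp_deriv Q Y hY a b _ measurable_const o1 o2 o3 o4 ht
  have dN : ∀ t ∈ Ioo a b, HasDerivAt N (N1 t) t := fun t ht =>
    fp_deriv Q Y hY a b _ hf f1 f2 f3 f4 ht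
  have hcM : ∀ t ∈ Icc a b, Real.exp (-c t) * M t = 1 := by
    intro t ht
    rw [← hc t ht, hM]
    simp only [one_mul]
    rw [← integral_const_mul]
    congr 1; ext ω; rw [← Real.exp_add]; congr 1; ring
  have hMne : ∀ t ∈ Icc a b, M t ≠ 0 := by
    intro t ht h0
    have := hcM t ht
    rw [h0] at this; simp at this
  have hexp : ∀ t ∈ Icc a b, Real.exp (-c t) = (M t)⁻¹ := fun t ht =>
    eq_inv_of_mul_eq_one_left (hcM t ht)
  set D : ℝ → ℝ := fun t => (-2 * (t - (a + b) / 2)) * (N t / M t)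
    + ((b - a) ^ 2 / 4 - (t - (a + b) / 2) ^ 2) * ((N1 t * M t - N t * M1 t) / M t ^ 2) with hD
  have cD : ContinuousOn D (Icc a b) := by
    have : ∀ t ∈ Icc a b, M t ^ 2 ≠ 0 := fun t ht => pow_ne_zero 2 (hMne t ht)
    have e1 : ContinuousOn (fun t => N t / M t) (Icc a b) := cN.div cM hMne
    have e2 : ContinuousOn (fun t => (N1 t * M t - N t * M1 t) / M t ^ 2) (Icc a b) :=
      ((cN1.mul cM).sub (cN.mul cM1)).div (cM.pow 2) this
    exact ((Continuous.continuousOn (by fun_prop)).mul e1).add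
      ((Continuous.continuousOn (by fun_prop)).mul e2)
  have iD : ∫ t in a..b, D t = 0 := by
    rw [intervalIntegral.integral_eq_sub_of_hasDerivAt_of_le hab.le
      (f := fun t => ((b - a) ^ 2 / 4 - (t - (a + b) / 2) ^ 2) * (N t / M t))]
    · ring
    · exact (Continuous.continuousOn (by fun_prop)).mul (cN.div cM hMne)
    · intro t ht
      have e1 := (dN t ht).div (dM t ht) (hMne t (Ioo_subset_Icc_self ht))
      have e2 : HasDerivAt (fun t : ℝ => (b - a) ^ 2 / 4 - (t - (a + b) / 2) ^ 2)
          (-2 * (t - (a + b) / 2)) t := by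
        have := (((hasDerivAt_id t).sub_const ((a + b) / 2)).pow 2).const_sub ((b - a) ^ 2 / 4)
        refine HasDerivAt.congr_deriv this ?_
        simp
      exact e2.mul e1
    · exact (cD.mono (by rw [uIcc_of_le hab.le])).intervalIntegrable
  have key : ∀ t ∈ Icc a b, ∫ ω,
      Real.exp ((t - a) * Y ω - c t) *
        (((b - a) ^ 2 / 4 - (t - (a + b) / 2) ^ 2) * (f ω - (t - (a + b) / 2)) *
          (Y ω - ∫ ω', Real.exp ((t - a) * Y ω' - c t) * Y ω' ∂Q)
          + (f ω - (t - (a + b) / 2)) ^ 2) ∂Q = D t + W t / M t + (t - (a + b) / 2) ^ 2 := by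
    intro t ht
    have em : ∫ ω', Real.exp ((t - a) * Y ω' - c t) * Y ω' ∂Q = M1 t / M t := by
      rw [div_eq_inv_mul, ← hexp t ht, hM1]
      simp only [one_mul]
      rw [← integral_const_mul]
      congr 1; ext ω; rw [sub_eq_add_neg, Real.exp_add]; ring
    rw [em]
    set u := t - (a + b) / 2
    set K := (b - a) ^ 2 / 4 - u ^ 2
    set μ := M1 t / M t with hμ
    have i1 := fp_int Q Y hY a b _ measurable_const o1 o2 ht
    have i2 := fp_int Q Y hY a b _ (by fun_prop) o3 o4 ht
    have i3 := fp_int Q Y hY a b _ hf f1 f2 ht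
    have i4 := fp_int Q Y hY a b _ (by fun_prop) f3 f4 ht
    have i5 := fp_int Q Y hY a b _ (by fun_prop) q1 q2 ht
    have : ∀ ω, Real.exp ((t - a) * Y ω - c t) * (K * (f ω - u) * (Y ω - μ) + (f ω - u) ^ 2) =
        (M t)⁻¹ * (K * (f ω * Y ω * Real.exp ((t - a) * Y ω))
          + (-K * u) * (1 * Y ω * Real.exp ((t - a) * Y ω))
          + (-K * μ - 2 * u) * (f ω * Real.exp ((t - a) * Y ω))
          + (K * u * μ + u ^ 2) * (1 * Real.exp ((t - a) * Y ω))
          + f ω ^ 2 * Real.exp ((t - a) * Y ω)) := by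
      intro ω
      rw [sub_eq_add_neg ((t - a) * Y ω), Real.exp_add, hexp t ht]
      ring
    simp_rw [this]
    rw [integral_const_mul, integral_add, integral_add, integral_add, integral_add,
      integral_const_mul, integral_const_mul, integral_const_mul, integral_const_mul]
    · change (M t)⁻¹ * (K * N1 t + (-K * u) * M1 t + (-K * μ - 2 * u) * N t
        + (K * u * μ + u ^ 2) * M t + W t) =
        (-2 * u) * (N t / M t) + K * ((N1 t * M t - N t * M1 t) / M t ^ 2) + W t / M t + u ^ 2
      have := hMne t ht
      rw [hμ]
      field_simp
      ring
    all_goals fun_prop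
  have hW0 : 0 ≤ ∫ t in a..b, W t / M t := by
    apply intervalIntegral.integral_nonneg hab.le
    intro t ht
    apply div_nonneg
    · exact integral_nonneg fun ω => by positivity
    · exact integral_nonneg fun ω => by positivity
  have icc : uIcc a b = Icc a b := uIcc_of_le hab.le
  rw [intervalIntegral.integral_congr (g := fun t => D t + W t / M t + (t - (a + b) / 2) ^ 2)
    (fun t ht => key t (icc ▸ ht))]
  have I1 : IntervalIntegrable D volume a b := (icc ▸ cD).intervalIntegrable
  have I2 : IntervalIntegrable (fun t => W t / M t) volume a b :=
    ContinuousOn.intervalIntegrable (icc ▸ cW.div cM hMne)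
  have I3 : IntervalIntegrable (fun t => (t - (a + b) / 2) ^ 2) volume a b :=
    Continuous.intervalIntegrable (by fun_prop) _ _
  rw [intervalIntegral.integral_add (I1.add I2) I3, intervalIntegral.integral_add I1 I2, iD,
    intervalIntegral.integral_comp_sub_right (fun x => x ^ 2), integral_pow]
  have : (b - a) ^ 3 / 12 = ((b - (a + b) / 2) ^ (2 + 1) - (a - (a + b) / 2) ^ (2 + 1)) / ((2 : ℕ) + 1) := by
    push_cast; ring
  rw [← this]
  linarith

lemma fp_wd_le {α : Type*} [MeasurableSpace α] (μ : Measure α) [SFinite μ] (F m : α → ENNReal)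
    (hm : Measurable m) : (μ.withDensity F).withDensity m ≤ μ.withDensity (fun x => F x * m x) := by
  obtain ⟨g, hg, hgF, he⟩ := exists_measurable_le_withDensity_eq (μ := μ) F
  rw [← he, ← withDensity_mul μ hg hm]
  exact withDensity_mono (Filter.Eventually.of_forall fun x => mul_le_mul_left (hgF x) (m x))

lemma fp_wd_eq {α : Type*} [MeasurableSpace α] (μ : Measure α) [SFinite μ] (F m : α → ENNReal)
    (hm : Measurable m) (h0 : ∀ x, m x ≠ 0) (ht : ∀ x, m x ≠ ⊤) :
    (μ.withDensity F).withDensity m = μ.withDensity (fun x => F x * m x) := by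
  apply le_antisymm (fp_wd_le μ F m hm)
  have h := fp_wd_le μ (fun x => F x * m x) (fun x => (m x)⁻¹) hm.inv
  have e : (fun x => F x * m x * (m x)⁻¹) = F := by
    ext x; rw [mul_assoc, ENNReal.mul_inv_cancel (h0 x) (ht x), mul_one]
  rw [e] at h
  have h2 : ((μ.withDensity (fun x => F x * m x)).withDensity (fun x => (m x)⁻¹)).withDensity m
      = μ.withDensity (fun x => F x * m x) := by
    rw [← withDensity_mul _ (f := fun x => (m x)⁻¹) hm.inv hm]
    have : ((fun x => (m x)⁻¹) * m) = 1 := by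
      ext x; simp [ENNReal.inv_mul_cancel (h0 x) (ht x)]
    rw [this, withDensity_one]
  rw [← h2]
  refine Measure.le_iff.2 fun s hs => ?_
  rw [withDensity_apply _ hs, withDensity_apply _ hs]
  exact lintegral_mono' (Measure.restrict_mono le_rfl h) le_rfl

lemma fp_wd_piece {α : Type*} [MeasurableSpace α] (μ : Measure α) [SFinite μ] (F : α → ENNReal)
    (m : ℝ → ENNReal) (hm : Measurable m) (h0 : ∀ x, m x ≠ 0) (ht : ∀ x, m x ≠ ⊤)
    (T T' : α → ℝ) (hT' : Measurable T') (A : Set α) (hA : MeasurableSet A)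
    (hTT' : ∀ x ∈ A, T x = T' x) :
    μ.withDensity (fun x => F x * m (T x)) A =
      (μ.withDensity F).withDensity (fun x => m (T' x)) A := by
  rw [fp_wd_eq μ F (fun x => m (T' x)) (hm.comp hT') (fun x => h0 _) (fun x => ht _),
    withDensity_apply _ hA, withDensity_apply _ hA]
  exact setLIntegral_congr_fun hA (fun x hx => by simp only [hTT' x hx])

lemma fp_wd_null {α : Type*} [MeasurableSpace α] (μ : Measure α) [SFinite μ] (F : α → ENNReal)
    (m : ℝ → ENNReal) (hm : Measurable m) (h0 : ∀ x, m x ≠ 0) (ht : ∀ x, m x ≠ ⊤)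
    (T : α → ℝ) (hT : AEMeasurable T (μ.withDensity (fun x => F x * m (T x)))) :
    μ.withDensity (fun x => F x * m (T x)) ≪ μ.withDensity F := by
  refine Measure.AbsolutelyContinuous.mk fun N hN hN0 => ?_
  set P := μ.withDensity (fun x => F x * m (T x))
  obtain ⟨M, hMs, hM, hM0⟩ := exists_measurable_superset_of_null (ae_iff.1 hT.ae_eq_mk)
  have h1 : P (N \ M) = 0 := by
    rw [fp_wd_piece μ F m hm h0 ht T (hT.mk T) hT.measurable_mk (N \ M) (hN.diff hM)]
    · exact withDensity_absolutelyContinuous _ _ (measure_mono_null sdiff_subset hN0)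
    · intro x hx
      by_contra h
      exact hx.2 (hMs h)
  rw [← measure_sdiff_null (s := N) hM0]
  exact h1

lemma fp_wd_main {α : Type*} [MeasurableSpace α] (μ : Measure α) [SFinite μ] (F : α → ENNReal)
    (m : ℝ → ENNReal) (hm : Measurable m) (h0 : ∀ x, m x ≠ 0) (ht : ∀ x, m x ≠ ⊤)
    (T T' : α → ℝ) (hT : AEMeasurable T (μ.withDensity (fun x => F x * m (T x))))
    (hT' : Measurable T') (hTT' : T =ᵐ[μ.withDensity F] T') :
    μ.withDensity (fun x => F x * m (T x)) = (μ.withDensity F).withDensity (fun x => m (T' x)) := by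
  obtain ⟨N, hNs, hN, hN0⟩ := exists_measurable_superset_of_null (ae_iff.1 hTT')
  ext A hA
  have h1 := fp_wd_null μ F m hm h0 ht T hT hN0
  have h2 : (μ.withDensity F).withDensity (fun x => m (T' x)) N = 0 :=
    withDensity_absolutelyContinuous _ _ hN0
  rw [← measure_sdiff_null (s := A) h1, ← measure_sdiff_null (s := A) h2]
  refine fp_wd_piece μ F m hm h0 ht T T' hT' (A \ N) (hA.diff hN) ?_
  intro x hx
  by_contra h
  exact hx.2 (hNs h)

lemma fp_pi_wd {α : Type*} [MeasurableSpace α] {n : ℕ} (ν : Measure α) [IsProbabilityMeasure ν]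
    (m : α → ENNReal) (hm : Measurable m) [IsProbabilityMeasure (ν.withDensity m)] :
    Measure.pi (fun _ : Fin n => ν.withDensity m) =
      (Measure.pi fun _ : Fin n => ν).withDensity (fun X => ∏ i, m (X i)) := by
  apply Measure.pi_eq
  intro s hs
  have hind : ProbabilityTheory.iIndepFun
      (fun (i : Fin n) (X : Fin n → α) => (s i).indicator m (X i)) (Measure.pi fun _ : Fin n => ν) :=
    ProbabilityTheory.iIndepFun_pi (fun i => (hm.indicator (hs i)).aemeasurable)
  have hbox : MeasurableSet (Set.univ.pi s) := MeasurableSet.univ_pi hs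
  rw [withDensity_apply _ hbox, ← lintegral_indicator hbox]
  have e : (Set.univ.pi s).indicator (fun X : Fin n → α => ∏ i, m (X i)) =
      fun X => ∏ i, (s i).indicator m (X i) := by
    ext X
    by_cases hX : X ∈ Set.univ.pi s
    · rw [indicator_of_mem hX]
      refine Finset.prod_congr rfl fun i _ => ?_
      rw [indicator_of_mem (hX i (mem_univ i))]
    · rw [indicator_of_notMem hX]
      simp only [Set.mem_univ_pi, not_forall] at hX
      obtain ⟨i, hi⟩ := hX
      exact (Finset.prod_eq_zero (Finset.mem_univ i) (indicator_of_notMem hi m)).symm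
  rw [e, ProbabilityTheory.lintegral_prod_eq_prod_lintegral_of_indepFun Finset.univ _ hind
    (fun i => (hm.indicator (hs i)).comp (measurable_pi_apply i))]
  refine Finset.prod_congr rfl fun i _ => ?_
  rw [withDensity_apply _ (hs i), ← lintegral_indicator (hs i)]
  exact (measurePreserving_eval (fun _ : Fin n => ν) i).lintegral_comp (hm.indicator (hs i))

/-- **Fingerprinting lemma for exponential families, single coordinate.**
Fix `j` and all other coordinates `η_{-j}` of the natural parameter, and draw
`η_j ∼ Uniform(I_j)` on a non-degenerate interval `I_j = [η₁ j, η₂ j]`.  Then any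
measurable `f : S^n → [-R_j/2, R_j/2]` satisfies
`E[Z^j + (f(X) − (η_j − m_j))²] ≥ R_j²/12`. -/
theorem fingerprinting_lemma_single_coordinate
    {d k n : ℕ} (S : Set (Fin d → ℝ)) (h : (Fin d → ℝ) → ℝ)
    (T : (Fin d → ℝ) → Fin k → ℝ)
    (η₁ η₂ : Fin k → ℝ) (hle : η₁ ≤ η₂)
    (hprob : ∀ η : Fin k → ℝ, (∀ l, η l ∈ Icc (η₁ l) (η₂ l)) →
      IsProbabilityMeasure (expFam S h T η))
    (hint : ∀ η : Fin k → ℝ, (∀ l, η l ∈ Icc (η₁ l) (η₂ l)) →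
      ∀ l, Integrable (fun x => T x l) (expFam S h T η))
    (j : Fin k) (hj : η₁ j < η₂ j)
    (η₀ : Fin k → ℝ) (hη₀ : ∀ l, η₀ l ∈ Icc (η₁ l) (η₂ l))
    (f : (Fin n → Fin d → ℝ) → ℝ) (hf : Measurable f)
    (hrange : ∀ X, |f X| ≤ (η₂ j - η₁ j) / 2) :
    (η₂ j - η₁ j) ^ 2 / 12 ≤
      ∫ t, (∫ X,
          (((η₂ j - η₁ j) ^ 2 / 4 - (t - (η₁ j + η₂ j) / 2) ^ 2) *
              (f X - (t - (η₁ j + η₂ j) / 2)) *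
              (∑ i, (T (X i) j - suffMean S h T (Function.update η₀ j t) j))
            + (f X - (t - (η₁ j + η₂ j) / 2)) ^ 2)
        ∂(Measure.pi fun _ : Fin n => expFam S h T (Function.update η₀ j t)))
      ∂(unif (η₁ j) (η₂ j)) := by
  set a := η₁ j with ha
  set b := η₂ j with hb
  set E : ℝ → Fin k → ℝ := fun t => Function.update η₀ j t with hE
  have hbox : ∀ t ∈ Icc a b, ∀ l, E t l ∈ Icc (η₁ l) (η₂ l) := by
    intro t ht l
    by_cases hl : l = j
    · subst hl; simpa [hE] using ht
    · simpa [hE, hl] using hη₀ l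
  have haI : a ∈ Icc a b := left_mem_Icc.2 hj.le
  have hbI : b ∈ Icc a b := right_mem_Icc.2 hj.le
  have hP : ∀ t ∈ Icc a b, IsProbabilityMeasure (expFam S h T (E t)) := fun t ht =>
    hprob _ (hbox t ht)
  have hI : ∀ t ∈ Icc a b, Integrable (fun x => T x j) (expFam S h T (E t)) := fun t ht =>
    hint _ (hbox t ht) j
  set ν := expFam S h T (E a) with hν
  haveI : IsProbabilityMeasure ν := hP a haI
  have hTa : AEMeasurable (fun x => T x j) ν := (hI a haI).aemeasurable
  obtain ⟨τ, hτ, hTτ⟩ := hTa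
  set c : ℝ → ℝ := fun t => logPartition S h T (E t) - logPartition S h T (E a) with hc
  have hPt : ∀ t ∈ Icc a b, expFam S h T (E t) =
      ν.withDensity (fun x => ENNReal.ofReal (Real.exp ((t - a) * τ x - c t))) := by
    intro t ht
    have hform : expFam S h T (E t) = volume.withDensity (fun x =>
        ENNReal.ofReal (S.indicator
          (fun y => h y * Real.exp (E a ⬝ᵥ T y - logPartition S h T (E a))) x) *
        ENNReal.ofReal (Real.exp ((t - a) * T x j - c t))) := by
      unfold expFam
      congr 1
      ext x
      rw [← ENNReal.ofReal_mul' (Real.exp_pos _).le]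
      congr 1
      by_cases hx : x ∈ S
      · rw [indicator_of_mem hx, indicator_of_mem hx, mul_assoc, ← Real.exp_add]
        congr 2
        have hd : E t ⬝ᵥ T x = E a ⬝ᵥ T x + (t - a) * T x j := by
          have : E t = E a + Pi.single j (t - a) := by
            ext l
            by_cases hl : l = j
            · subst hl; simp [hE]
            · simp [hE, hl]
          rw [this, add_dotProduct, single_dotProduct]
        rw [hd, hc]; ring
      · rw [indicator_of_notMem hx, indicator_of_notMem hx, zero_mul]
    have hm := (hI t ht).aemeasurable
    rw [hform] at hm ⊢
    exact fp_wd_main volume _ (fun r => ENNReal.ofReal (Real.exp ((t - a) * r - c t)))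
      (by fun_prop) (fun r => (ENNReal.ofReal_pos.2 (Real.exp_pos _)).ne')
      (fun r => ENNReal.ofReal_ne_top) (fun x => T x j) τ hm hτ hTτ
  have hae : ∀ t ∈ Icc a b, (fun x => T x j) =ᵐ[expFam S h T (E t)] τ := by
    intro t ht
    rw [hPt t ht]
    exact (withDensity_absolutelyContinuous _ _).ae_eq hTτ
  set Q : Measure (Fin n → Fin d → ℝ) := Measure.pi (fun _ : Fin n => ν) with hQ
  set Y : (Fin n → Fin d → ℝ) → ℝ := fun X => ∑ i, τ (X i) with hY
  have hYm : Measurable Y := by fun_prop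
  set C : ℝ → ℝ := fun t => n * c t with hC
  have hpi : ∀ t ∈ Icc a b, Measure.pi (fun _ : Fin n => expFam S h T (E t)) =
      Q.withDensity (fun X => ENNReal.ofReal (Real.exp ((t - a) * Y X - C t))) := by
    intro t ht
    have := hP t ht
    rw [hPt t ht] at this ⊢
    rw [fp_pi_wd ν _ (by fun_prop)]
    congr 1
    ext X
    rw [← ENNReal.ofReal_prod_of_nonneg (fun i _ => (Real.exp_pos _).le), ← Real.exp_sum,
      Finset.sum_sub_distrib, ← Finset.mul_sum]
    simp [hY, hC]
  have hintg : ∀ t ∈ Icc a b, ∀ G : (Fin n → Fin d → ℝ) → ℝ,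
      ∫ X, G X ∂(Measure.pi (fun _ : Fin n => expFam S h T (E t))) =
      ∫ X, Real.exp ((t - a) * Y X - C t) * G X ∂Q := by
    intro t ht G
    rw [hpi t ht, integral_withDensity_eq_integral_toReal_smul (by fun_prop)
      (Filter.Eventually.of_forall fun X => ENNReal.ofReal_lt_top)]
    simp only [ENNReal.toReal_ofReal (Real.exp_pos _).le, smul_eq_mul]
  have hinteg : ∀ t ∈ Icc a b, ∀ G : (Fin n → Fin d → ℝ) → ℝ,
      Integrable G (Measure.pi (fun _ : Fin n => expFam S h T (E t))) →
      Integrable (fun X => G X * Real.exp ((t - a) * Y X)) Q := by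
    intro t ht G hG
    rw [hpi t ht, integrable_withDensity_iff_integrable_smul' (by fun_prop)
      (Filter.Eventually.of_forall fun X => ENNReal.ofReal_lt_top)] at hG
    simp only [ENNReal.toReal_ofReal (Real.exp_pos _).le, smul_eq_mul] at hG
    refine (hG.const_mul (Real.exp (C t))).congr (Filter.Eventually.of_forall fun X => ?_)
    simp only [Real.exp_sub]
    field_simp
  have hτint : ∀ t ∈ Icc a b, Integrable τ (expFam S h T (E t)) := fun t ht =>
    (hI t ht).congr (hae t ht)
  have hYint : ∀ t ∈ Icc a b,
      Integrable Y (Measure.pi (fun _ : Fin n => expFam S h T (E t))) := by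
    intro t ht
    have := hP t ht
    exact integrable_finsetSum _ fun i _ => integrable_comp_eval (hτint t ht)
  have hmean : ∀ t ∈ Icc a b, (n : ℝ) * suffMean S h T (E t) j =
      ∫ X, Real.exp ((t - a) * Y X - C t) * Y X ∂Q := by
    intro t ht
    have := hP t ht
    rw [← hintg t ht, hY, integral_finsetSum _ fun i _ => integrable_comp_eval (hτint t ht)]
    have : ∀ i : Fin n, ∫ X : Fin n → Fin d → ℝ, τ (X i)
        ∂(Measure.pi (fun _ : Fin n => expFam S h T (E t))) = suffMean S h T (E t) j := by
      intro i
      rw [integral_comp_eval (μ := fun _ : Fin n => expFam S h T (E t))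
        hτ.aestronglyMeasurable]
      exact (integral_congr_ae (hae t ht)).symm
    simp [this]
  have hcore := fp_core Q Y hYm a b hj f hf hrange C ?_ ?_ (hYint a haI)
    (hinteg b hbI Y (hYint b hbI))
  · have hinner : ∀ t ∈ Icc a b, (∫ X,
          (((b - a) ^ 2 / 4 - (t - (a + b) / 2) ^ 2) *
              (f X - (t - (a + b) / 2)) *
              (∑ i, (T (X i) j - suffMean S h T (E t) j))
            + (f X - (t - (a + b) / 2)) ^ 2)
        ∂(Measure.pi fun _ : Fin n => expFam S h T (E t))) =
        ∫ X, Real.exp ((t - a) * Y X - C t) *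
        (((b - a) ^ 2 / 4 - (t - (a + b) / 2) ^ 2) * (f X - (t - (a + b) / 2)) *
          (Y X - ∫ X', Real.exp ((t - a) * Y X' - C t) * Y X' ∂Q)
          + (f X - (t - (a + b) / 2)) ^ 2) ∂Q := by
      intro t ht
      have := hP t ht
      rw [← hintg t ht (fun X => ((b - a) ^ 2 / 4 - (t - (a + b) / 2) ^ 2) *
        (f X - (t - (a + b) / 2)) *
          (Y X - ∫ X', Real.exp ((t - a) * Y X' - C t) * Y X' ∂Q)
          + (f X - (t - (a + b) / 2)) ^ 2)]
      apply integral_congr_ae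
      have hall : ∀ᵐ X ∂(Measure.pi fun _ : Fin n => expFam S h T (E t)),
          ∀ i, T (X i) j = τ (X i) := by
        rw [ae_all_iff]
        intro i
        exact (measurePreserving_eval (fun _ : Fin n => expFam S h T (E t))
          i).quasiMeasurePreserving.ae (hae t ht)
      filter_upwards [hall] with X hX
      rw [← hmean t ht, Finset.sum_sub_distrib]
      simp [hX, hY]
    unfold unif
    rw [integral_smul_measure, setIntegral_congr_fun measurableSet_Icc hinner,
      integral_Icc_eq_integral_Ioc, ← intervalIntegral.integral_of_le hj.le, smul_eq_mul,
      ENNReal.toReal_inv, ENNReal.toReal_ofReal (sub_pos.2 hj).le]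
    rw [inv_mul_eq_div, le_div_iff₀ (sub_pos.2 hj)]
    refine le_trans (le_of_eq ?_) hcore
    ring
  · intro t ht
    have := hP t ht
    have h1 := hintg t ht (fun _ => 1)
    simpa using h1.symm
  · have := hP b hbI
    simpa using hinteg b hbI (fun _ => 1) (integrable_const _)
end
end

section
/- There exists a probability distribution D over mean vectors p ∈ [1/3, 2/3]^d and universal constants c₁, c₂, c₃ > 0 such that: for every α with 0 < α ≤ c₁√d, every ε ∈ [0,1], every δ ∈ [0,1] with δ ≤ c₂/n, and every (ε,δ)-DP mechanism M : {0,1}^{n×d} → [1/3,2/3]^d satisfying E_{p∼D, X∼P_p^{⊗n}, M}[‖M(X) − p‖₂²] ≤ α² (where P_p is the product Bernoulli distribution on {0,1}^d with mean vector p), one must have n ≥ c₃ · d/(α·ε). -/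
open MeasureTheory ProbabilityTheory Set

noncomputable section

/-- Two datasets are neighboring if they differ in exactly one entry. -/
def Neighbor {𝒳 : Type*} {n : ℕ} (x y : Fin n → 𝒳) : Prop :=
  ∃ i : Fin n, x i ≠ y i ∧ ∀ j : Fin n, j ≠ i → x j = y j

/-- `(ε, δ)`-differential privacy for a mechanism `M` mapping datasets to output
distributions (a Markov kernel given as a function to measures). -/
def IsDP {𝒳 Ω : Type*} [MeasurableSpace Ω] {n : ℕ}
    (M : (Fin n → 𝒳) → Measure Ω) (ε δ : ℝ) : Prop :=
  ∀ x y : Fin n → 𝒳, Neighbor x y → ∀ s : Set Ω, MeasurableSet s →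
    M x s ≤ ENNReal.ofReal (Real.exp ε) * M y s + ENNReal.ofReal δ

/-- The Bernoulli measure on `Bool` with success probability `p`. -/
def bernoulliBool (p : ℝ) : Measure Bool :=
  ENNReal.ofReal p • Measure.dirac true + ENNReal.ofReal (1 - p) • Measure.dirac false

/-- The product Bernoulli distribution on `{0,1}^d` with mean vector `p`. -/
def prodBernoulli {d : ℕ} (p : Fin d → ℝ) : Measure (Fin d → Bool) :=
  Measure.pi fun j => bernoulliBool (p j)


namespace PBM

def bR (t : ℝ) (x : Bool) : ℝ := if x then t else 1 - t
def vB (x : Bool) : ℝ := if x then 1 else 0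
def Q {d : ℕ} (p : Fin d → ℝ) (x : Fin d → Bool) : ℝ := ∏ j, bR (p j) (x j)
def P {n d : ℕ} (p : Fin d → ℝ) (X : Fin n → Fin d → Bool) : ℝ := ∏ i, Q p (X i)
def ph (t : ℝ) : ℝ := (t - 1/3) * (2/3 - t)
def hh (t : ℝ) : ℝ := (2*t-1) * (5/18 - (2*t-1)^2/2)
def muU : Measure ℝ := (3 : ENNReal) • volume.restrict (Icc ((1:ℝ)/3) (2/3))
def DD (d : ℕ) : Measure (Fin d → ℝ) := Measure.pi fun _ => muU
def Cube (d : ℕ) : Set (Fin d → ℝ) := {p | ∀ j, p j ∈ Icc ((1 : ℝ) / 3) ((2 : ℝ) / 3)}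
def Z {d : ℕ} (p : Fin d → ℝ) (y : Fin d → Bool) (a : Fin d → ℝ) : ℝ :=
  ∑ j, ph (p j) * (a j - p j) * (vB (y j) - p j)

/-! ### prior -/
instance : IsProbabilityMeasure muU := by
  constructor
  simp only [muU, Measure.smul_apply, Measure.restrict_apply_univ, Real.volume_Icc, smul_eq_mul]
  rw [show (3 : ENNReal) = ENNReal.ofReal 3 by simp, ← ENNReal.ofReal_mul (by norm_num)]
  norm_num

instance (d : ℕ) : IsProbabilityMeasure (DD d) := by unfold DD; infer_instance

lemma muU_ae : ∀ᵐ t ∂muU, t ∈ Icc ((1:ℝ)/3) (2/3) := by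
  unfold muU
  apply Measure.ae_smul_measure
  exact ae_restrict_mem measurableSet_Icc

lemma DD_ae (d : ℕ) : ∀ᵐ p ∂(DD d), p ∈ Cube d := by
  unfold DD Cube
  have : ∀ j, ∀ᵐ p ∂(Measure.pi fun _ : Fin d => muU), p j ∈ Icc ((1 : ℝ) / 3) ((2 : ℝ) / 3) :=
    fun j => (measurePreserving_eval (fun _ : Fin d => muU) j).quasiMeasurePreserving.ae muU_ae
  exact ae_all_iff.2 this

lemma muU_integral (f : ℝ → ℝ) : ∫ t, f t ∂muU = 3 * ∫ t in (1/3:ℝ)..(2/3), f t := by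
  unfold muU
  rw [integral_smul_measure, intervalIntegral.integral_of_le (by norm_num),
    integral_Icc_eq_integral_Ioc]
  simp

lemma isCompact_Cube (d : ℕ) : IsCompact (Cube d) := by
  have : Cube d = Set.pi univ (fun _ => Icc ((1:ℝ)/3) (2/3)) := by
    ext; simp only [Cube, mem_ofPred_eq, mem_univ_pi]
  rw [this]
  exact isCompact_univ_pi fun _ => isCompact_Icc

lemma integrable_of_cube {d : ℕ} (m : Measure (Fin d → ℝ)) [IsFiniteMeasure m]
    (hm : ∀ᵐ p ∂m, p ∈ Cube d) {f : (Fin d → ℝ) → ℝ} (hf : Continuous f) : Integrable f m := by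
  obtain ⟨C, hC⟩ := (isCompact_Cube d).exists_bound_of_continuousOn hf.continuousOn
  exact Integrable.of_bound hf.aestronglyMeasurable C (hm.mono fun p hp => hC p hp)

lemma DD_integrable {d : ℕ} {f : (Fin d → ℝ) → ℝ} (hf : Continuous f) : Integrable f (DD d) :=
  integrable_of_cube _ (DD_ae d) hf

/-! ### one-dimensional integration by parts -/
lemma bR_hasDeriv (x : Bool) (t : ℝ) :
    HasDerivAt (fun t => bR t x) (if x then 1 else -1) t := by
  cases x
  · simpa [bR] using (hasDerivAt_id t).const_sub 1
  · simpa [bR] using hasDerivAt_id' t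

lemma bR_cont (x : Bool) : Continuous fun t => bR t x := by
  cases x <;> simp [bR] <;> fun_prop

lemma parts {n : ℕ} (x : Fin n → Bool) :
    ∫ t, (∏ i, bR t (x i)) * (ph t * ∑ i, (vB (x i) - t)) ∂muU
      = ∫ t, (∏ i, bR t (x i)) * hh t ∂muU := by
  have hb : Continuous fun t : ℝ => ∏ i, bR t (x i) :=
    continuous_finsetProd _ fun i _ => bR_cont (x i)
  have c1 : Continuous fun t : ℝ => (∏ i, bR t (x i)) * (ph t * ∑ i, (vB (x i) - t)) := by
    unfold ph; fun_prop
  have c2 : Continuous fun t : ℝ => (∏ i, bR t (x i)) * hh t := by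
    unfold hh; fun_prop
  have hd : ∀ t : ℝ, HasDerivAt (fun t => (∏ i, bR t (x i)) * (t * (1 - t) * ph t))
      ((∏ i, bR t (x i)) * (ph t * ∑ i, (vB (x i) - t)) - (∏ i, bR t (x i)) * hh t) t := by
    intro t
    have h1 := HasDerivAt.fun_finsetProd (u := Finset.univ) (x := t)
      (f := fun i t => bR t (x i)) (f' := fun i => if x i then 1 else -1)
      (fun i _ => bR_hasDeriv (x i) t)
    have h2 : HasDerivAt (fun t : ℝ => t * (1 - t) * ph t) (- hh t) t := by
      unfold ph
      have := (((hasDerivAt_id t).mul ((hasDerivAt_id t).const_sub 1))).mul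
        (((hasDerivAt_id t).sub_const (1/3)).mul ((hasDerivAt_id t).const_sub (2/3)))
      refine this.congr_deriv ?_
      simp [hh]; ring
    refine (h1.mul h2).congr_deriv ?_
    have h3 : (∑ i, (∏ j ∈ Finset.univ.erase i, bR t (x j)) • (if x i then (1:ℝ) else -1))
        * (t * (1 - t)) = (∏ i, bR t (x i)) * ∑ i, (vB (x i) - t) := by
      rw [Finset.sum_mul, Finset.mul_sum]
      refine Finset.sum_congr rfl fun i _ => ?_
      rw [← Finset.mul_prod_erase Finset.univ (fun i => bR t (x i)) (Finset.mem_univ i)]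
      cases h : x i <;> simp [bR, vB] <;> ring
    linear_combination ph t * h3
  have := intervalIntegral.integral_eq_sub_of_hasDerivAt (a := 1/3) (b := 2/3)
    (fun t _ => hd t) ((c1.sub c2).intervalIntegrable _ _)
  rw [intervalIntegral.integral_sub (c1.intervalIntegrable _ _) (c2.intervalIntegrable _ _)] at this
  rw [muU_integral, muU_integral]
  simp only [ph] at this ⊢
  norm_num at this ⊢
  linarith

lemma P_swap {n d : ℕ} (p : Fin d → ℝ) (X : Fin n → Fin d → Bool) :
    P p X = ∏ j, ∏ i, bR (p j) (X i j) := by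
  unfold P Q; rw [Finset.prod_comm]

lemma partsD {n d : ℕ} (X : Fin n → Fin d → Bool) (j : Fin d) :
    ∫ p, P p X * (ph (p j) * ∑ i, (vB (X i j) - p j)) ∂(DD d)
      = ∫ p, P p X * hh (p j) ∂(DD d) := by
  have key : ∀ u : ℝ → ℝ, ∫ p, P p X * u (p j) ∂(DD d)
      = ∏ k, ∫ t, (∏ i, bR t (X i k)) * (if k = j then u t else 1) ∂muU := by
    intro u
    unfold DD
    rw [← integral_fintype_prod_eq_prod (fun k t => (∏ i, bR t (X i k)) * (if k = j then u t else 1))]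
    congr 1; ext p
    rw [Finset.prod_mul_distrib, P_swap]
    simp
  rw [key (fun t => ph t * ∑ i, (vB (X i j) - t)), key]
  refine Finset.prod_congr rfl fun k _ => ?_
  by_cases h : k = j
  · subst h; simpa using parts (fun i => X i k)
  · simp [h]

/-! ### discrete moments -/
lemma bR_sum (t : ℝ) : ∑ b, bR t b = 1 := by simp [bR]

lemma Q_prod {d : ℕ} (p : Fin d → ℝ) (g : Fin d → Bool → ℝ) :
    ∑ y, Q p y * ∏ j, g j (y j) = ∏ j, ∑ b, bR (p j) b * g j b := by
  rw [Finset.prod_univ_sum]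
  simp only [Q, Finset.prod_mul_distrib, Fintype.piFinset_univ]

lemma Q_sum {d : ℕ} (p : Fin d → ℝ) : ∑ y, Q p y = 1 := by
  have := Q_prod p (fun _ _ => 1)
  simpa [bR] using this

lemma P_sum {n d : ℕ} (p : Fin d → ℝ) : ∑ X : Fin n → Fin d → Bool, P p X = 1 := by
  have := (Finset.prod_univ_sum (fun _ : Fin n => (Finset.univ : Finset (Fin d → Bool)))
    (fun _ y => Q p y)).symm
  simpa [P, Q_sum] using this

lemma Q_mean {d : ℕ} (p : Fin d → ℝ) (j : Fin d) : ∑ y, Q p y * (vB (y j) - p j) = 0 := by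
  have := Q_prod p (fun k b => if k = j then vB b - p j else 1)
  simp only [Finset.prod_ite_eq', Finset.mem_univ, if_true] at this
  rw [this]
  apply Finset.prod_eq_zero (Finset.mem_univ j)
  simp [bR, vB]; ring

lemma Q_cov {d : ℕ} (p : Fin d → ℝ) (j k : Fin d) :
    ∑ y, Q p y * ((vB (y j) - p j) * (vB (y k) - p k))
      = if j = k then p j * (1 - p j) else 0 := by
  have := Q_prod p (fun l b => (if l = j then vB b - p j else 1) * (if l = k then vB b - p k else 1))
  simp only [Finset.prod_mul_distrib, Finset.prod_ite_eq', Finset.mem_univ,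
    if_true] at this
  rw [this]
  split_ifs with h
  · subst h
    rw [Finset.prod_eq_single j]
    · simp [bR, vB]; ring
    · intro b _ hb; simp [hb, bR]
    · simp
  · apply Finset.prod_eq_zero (Finset.mem_univ j)
    simp [bR, vB, h]; ring

lemma Q_Zsum {d : ℕ} (p a : Fin d → ℝ) : ∑ y, Q p y * Z p y a = 0 := by
  unfold Z
  simp only [Finset.mul_sum]
  rw [Finset.sum_comm]
  refine Finset.sum_eq_zero fun j _ => ?_
  have := Q_mean p j
  rw [show (0:ℝ) = ph (p j) * (a j - p j) * 0 by simp, ← this, Finset.mul_sum]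
  exact Finset.sum_congr rfl fun y _ => by ring

lemma Q_Zsq {d : ℕ} (p a : Fin d → ℝ) (hp : p ∈ Cube d) :
    ∑ y, Q p y * Z p y a ^ 2 ≤ ∑ j, (a j - p j) ^ 2 := by
  have e : ∑ y, Q p y * Z p y a ^ 2
      = ∑ j, (ph (p j) * (a j - p j)) ^ 2 * (p j * (1 - p j)) := by
    have : ∀ y, Q p y * Z p y a ^ 2 = ∑ j, ∑ k, (ph (p j) * (a j - p j)) * (ph (p k) * (a k - p k))
        * (Q p y * ((vB (y j) - p j) * (vB (y k) - p k))) := by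
      intro y
      rw [sq, Z, Finset.sum_mul_sum, Finset.mul_sum]
      refine Finset.sum_congr rfl fun j _ => ?_
      rw [Finset.mul_sum]
      exact Finset.sum_congr rfl fun k _ => by ring
    simp only [this]
    rw [Finset.sum_comm]
    refine Finset.sum_congr rfl fun j _ => ?_
    rw [Finset.sum_comm]
    simp only [← Finset.mul_sum, Q_cov]
    simp [sq]
  rw [e]
  refine Finset.sum_le_sum fun j _ => ?_
  obtain ⟨h1, h2⟩ := hp j
  have a1 : 0 ≤ ph (p j) := by unfold ph; nlinarith
  have a2 : ph (p j) ≤ 1 := by unfold ph; nlinarith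
  have a3 : 0 ≤ p j * (1 - p j) := by nlinarith
  have a4 : p j * (1 - p j) ≤ 1 := by nlinarith
  have a5 : ph (p j) ^ 2 * (p j * (1 - p j)) ≤ 1 := by
    have : ph (p j) ^ 2 ≤ 1 := by nlinarith
    nlinarith [sq_nonneg (ph (p j))]
  have := mul_le_mul_of_nonneg_right a5 (sq_nonneg (a j - p j))
  nlinarith

lemma bR_nonneg {t : ℝ} (ht : t ∈ Icc ((1:ℝ)/3) (2/3)) (x : Bool) : 0 ≤ bR t x := by
  obtain ⟨h1, h2⟩ := ht
  cases x <;> simp [bR] <;> linarith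

lemma Q_nonneg {d : ℕ} {p : Fin d → ℝ} (hp : p ∈ Cube d) (y) : 0 ≤ Q p y :=
  Finset.prod_nonneg fun j _ => bR_nonneg (hp j) _

lemma P_nonneg {n d : ℕ} {p : Fin d → ℝ} (hp : p ∈ Cube d) (X : Fin n → Fin d → Bool) :
    0 ≤ P p X := Finset.prod_nonneg fun _ _ => Q_nonneg hp _

lemma Z_bound {d : ℕ} {p a : Fin d → ℝ} (hp : p ∈ Cube d) (ha : a ∈ Cube d) (y) :
    |Z p y a| ≤ d := by
  unfold Z
  refine (Finset.abs_sum_le_sum_abs _ _).trans ?_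
  have : ∀ j ∈ Finset.univ, |ph (p j) * (a j - p j) * (vB (y j) - p j)| ≤ (1:ℝ) := by
    intro j _
    obtain ⟨h1, h2⟩ := hp j
    obtain ⟨h3, h4⟩ := ha j
    have b1 : |ph (p j)| ≤ 1 := by unfold ph; rw [abs_le]; constructor <;> nlinarith
    have b2 : |a j - p j| ≤ 1 := by rw [abs_le]; constructor <;> linarith
    have b3 : |vB (y j) - p j| ≤ 1 := by
      cases y j <;> simp [vB] <;> rw [abs_le] <;> constructor <;> linarith
    rw [abs_mul, abs_mul]
    exact mul_le_one₀ (mul_le_one₀ b1 (abs_nonneg _) b2) (abs_nonneg _) b3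
  simpa using Finset.sum_le_sum this

lemma Z_cont {d : ℕ} (p : Fin d → ℝ) (y) : Continuous (Z p y) := by unfold Z; fun_prop

/-! ### swapping -/
lemma swap {n d : ℕ} (p : Fin d → ℝ) (i : Fin n)
    (T : (Fin n → Fin d → Bool) → (Fin d → Bool) → ℝ) :
    ∑ X, ∑ y, P p X * Q p y * T (Function.update X i y) (X i)
      = ∑ X, ∑ y, P p X * Q p y * T X y := by
  rw [← Fintype.sum_prod_type', ← Fintype.sum_prod_type']
  let f : (Fin n → Fin d → Bool) × (Fin d → Bool) → (Fin n → Fin d → Bool) × (Fin d → Bool) :=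
    fun z => (Function.update z.1 i z.2, z.1 i)
  have hf : Function.Involutive f := by intro z; simp [f]
  refine Fintype.sum_equiv hf.toPerm _ _ ?_
  rintro ⟨X, y⟩
  simp only [Function.Involutive.coe_toPerm, f]
  congr 1
  unfold P
  rw [← Finset.mul_prod_erase Finset.univ (fun i => Q p (X i)) (Finset.mem_univ i),
    ← Finset.mul_prod_erase Finset.univ (fun k => Q p (Function.update X i y k)) (Finset.mem_univ i)]
  have : ∏ k ∈ Finset.univ.erase i, Q p (Function.update X i y k)
      = ∏ k ∈ Finset.univ.erase i, Q p (X k) :=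
    Finset.prod_congr rfl fun k hk => by
      rw [Function.update_of_ne (Finset.ne_of_mem_erase hk)]
  rw [this]; simp; ring

/-! ### DP -/
lemma dp_nonneg {Ω : Type*} [MeasurableSpace Ω] (μ ν : Measure Ω) [IsProbabilityMeasure μ]
    [IsProbabilityMeasure ν] {ε δ B : ℝ} (hδ : 0 ≤ δ) (hB : 0 ≤ B)
    (h : ∀ s, MeasurableSet s → μ s ≤ ENNReal.ofReal (Real.exp ε) * ν s + ENNReal.ofReal δ)
    (f : Ω → ℝ) (hf : Measurable f) (h0 : ∀ a, 0 ≤ f a) (h1 : ∀ᵐ a ∂μ, f a ≤ B)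
    (h2 : ∀ᵐ a ∂ν, f a ≤ B) :
    ∫ a, f a ∂μ ≤ Real.exp ε * ∫ a, f a ∂ν + δ * B := by
  have h' : ∀ s, MeasurableSet s → μ.real s ≤ Real.exp ε * ν.real s + δ := by
    intro s hs
    have := ENNReal.toReal_mono (by finiteness) (h s hs)
    rw [ENNReal.toReal_add (by finiteness) (by finiteness), ENNReal.toReal_mul,
      ENNReal.toReal_ofReal (Real.exp_pos _).le, ENNReal.toReal_ofReal hδ] at this
    exact this
  have int : ∀ (m : Measure Ω) [IsProbabilityMeasure m], (∀ᵐ a ∂m, f a ≤ B) → Integrable f m :=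
    fun m _ hm => Integrable.of_bound hf.aestronglyMeasurable B
      (hm.mono fun a ha => by rwa [Real.norm_of_nonneg (h0 a)])
  rw [(int μ h1).integral_eq_integral_Ioc_meas_le (ae_of_all _ h0) h1,
    (int ν h2).integral_eq_integral_Ioc_meas_le (ae_of_all _ h0) h2]
  have anti : ∀ (m : Measure Ω) [IsProbabilityMeasure m],
      IntegrableOn (fun t => m.real {a | t ≤ f a}) (Ioc 0 B) := by
    intro m _
    have : Antitone (fun t => m.real {a | t ≤ f a}) := fun s t hst =>
      measureReal_mono (fun a ha => le_trans hst ha)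
    refine Measure.integrableOn_of_bounded (M := 1) (by simp) this.measurable.aestronglyMeasurable ?_
    refine ae_of_all _ fun t => ?_
    rw [Real.norm_of_nonneg measureReal_nonneg]
    exact measureReal_le_one
  calc ∫ t in Ioc 0 B, μ.real {a | t ≤ f a}
      ≤ ∫ t in Ioc 0 B, (Real.exp ε * ν.real {a | t ≤ f a} + δ) := by
        refine integral_mono (anti μ) (((anti ν).const_mul _).add (by simp)) fun t => ?_
        exact h' _ (measurableSet_le measurable_const hf)
    _ = _ := by
        rw [integral_add ((anti ν).const_mul _) (by simp), integral_const_mul]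
        simp [hB, mul_comm]

lemma dp_int {Ω : Type*} [MeasurableSpace Ω] (μ ν : Measure Ω) [IsProbabilityMeasure μ]
    [IsProbabilityMeasure ν] {ε δ B : ℝ} (hε : 0 ≤ ε) (hε1 : ε ≤ 1) (hδ : 0 ≤ δ) (hB : 0 ≤ B)
    (h : ∀ s, MeasurableSet s → μ s ≤ ENNReal.ofReal (Real.exp ε) * ν s + ENNReal.ofReal δ)
    (h' : ∀ s, MeasurableSet s → ν s ≤ ENNReal.ofReal (Real.exp ε) * μ s + ENNReal.ofReal δ)
    (f : Ω → ℝ) (hf : Measurable f) (h1 : ∀ᵐ a ∂μ, |f a| ≤ B)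
    (h2 : ∀ᵐ a ∂ν, |f a| ≤ B) :
    ∫ a, f a ∂μ ≤ ∫ a, f a ∂ν + 2 * ε * ∫ a, |f a| ∂ν + 2 * δ * B := by
  have A1 := dp_nonneg μ ν hδ hB h (fun a => max (f a) 0) (by fun_prop) (fun a => le_max_right _ _)
    (h1.mono fun a ha => max_le ((le_abs_self _).trans ha) hB)
    (h2.mono fun a ha => max_le ((le_abs_self _).trans ha) hB)
  have A2 := dp_nonneg ν μ hδ hB h' (fun a => max (-f a) 0) (by fun_prop) (fun a => le_max_right _ _)
    (h2.mono fun a ha => max_le ((neg_le_abs _).trans ha) hB)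
    (h1.mono fun a ha => max_le ((neg_le_abs _).trans ha) hB)
  have int : ∀ (m : Measure Ω) [IsProbabilityMeasure m], (∀ᵐ a ∂m, |f a| ≤ B) →
      (Integrable f m) :=
    fun m _ hm => (Integrable.of_bound hf.aestronglyMeasurable B hm)
  have e1 : ∀ (m : Measure Ω) [IsProbabilityMeasure m], (∀ᵐ a ∂m, |f a| ≤ B) →
      ∫ a, f a ∂m = ∫ a, max (f a) 0 ∂m - ∫ a, max (-f a) 0 ∂m := by
    intro m _ hm
    rw [← integral_sub (int m hm).pos_part (int m hm).neg_part]
    congr 1; ext a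
    rcases le_total 0 (f a) with h | h <;> simp [h]
  have e2 : ∫ a, |f a| ∂ν = ∫ a, max (f a) 0 ∂ν + ∫ a, max (-f a) 0 ∂ν := by
    rw [← integral_add (int ν h2).pos_part (int ν h2).neg_part]
    congr 1; ext a
    rcases le_total 0 (f a) with h | h <;> simp [h, abs_of_nonneg, abs_of_nonpos]
  rw [e1 μ h1, e1 ν h2, e2]
  have p1 : 0 ≤ ∫ a, max (f a) 0 ∂ν := integral_nonneg fun a => le_max_right _ _
  have p2 : 0 ≤ ∫ a, max (-f a) 0 ∂ν := integral_nonneg fun a => le_max_right _ _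
  have p3 : 0 ≤ ∫ a, max (-f a) 0 ∂μ := integral_nonneg fun a => le_max_right _ _
  set u := ∫ a, max (f a) 0 ∂ν
  set v := ∫ a, max (-f a) 0 ∂ν
  set w := ∫ a, max (-f a) 0 ∂μ
  have E1 : Real.exp ε ≤ 1 + 2 * ε := by
    have := Real.abs_exp_sub_one_le (x := ε) (by rwa [abs_of_nonneg hε])
    rw [abs_of_nonneg hε] at this
    linarith [le_abs_self (Real.exp ε - 1)]
  have E2 : v - 2 * ε * v - δ * B ≤ w := by
    have q0 : 0 ≤ δ * B := mul_nonneg hδ hB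
    have q1 : 1 ≤ Real.exp ε := Real.one_le_exp hε
    by_contra hc
    push Not at hc
    have q2 : v ≤ (1 + 2 * ε) * w + δ * B := by nlinarith
    have q3 : (1 + 2*ε) * w ≤ (1 + 2 * ε) * (v - 2 * ε * v - δ * B) := by nlinarith
    have q4 : (1 + 2*ε) * w < (1 + 2 * ε) * (v - 2 * ε * v - δ * B) := by nlinarith
    nlinarith [mul_nonneg (mul_nonneg hε hε) p2, mul_nonneg hε q0]
  nlinarith [mul_le_mul_of_nonneg_right E1 p1]

/-! ### converting the integral -/
instance (t : ℝ) : IsFiniteMeasure (bernoulliBool t) := by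
  constructor
  simp [bernoulliBool]
instance {d : ℕ} (p : Fin d → ℝ) : IsFiniteMeasure (prodBernoulli p) := by
  unfold prodBernoulli; infer_instance

lemma bern_real {t : ℝ} (ht : t ∈ Icc ((1:ℝ)/3) (2/3)) (x : Bool) :
    (bernoulliBool t).real {x} = bR t x := by
  obtain ⟨h1, h2⟩ := ht
  cases x <;> simp [bernoulliBool, bR, measureReal_def] <;> linarith

lemma conv {n d : ℕ} {p : Fin d → ℝ} (hp : p ∈ Cube d) (G : (Fin n → Fin d → Bool) → ℝ) :
    ∫ X, G X ∂(Measure.pi fun _ : Fin n => prodBernoulli p) = ∑ X, P p X * G X := by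
  rw [integral_fintype (Integrable.of_finite)]
  refine Finset.sum_congr rfl fun X _ => ?_
  rw [smul_eq_mul]
  congr 1
  rw [measureReal_def, Measure.pi_singleton, ENNReal.toReal_prod]
  unfold P Q
  refine Finset.prod_congr rfl fun i _ => ?_
  unfold prodBernoulli
  rw [Measure.pi_singleton, ENNReal.toReal_prod]
  exact Finset.prod_congr rfl fun j _ => bern_real (hp j) _

/-! ### main estimates -/
def err {n d : ℕ} (M : (Fin n → Fin d → Bool) → Measure (Fin d → ℝ)) (p : Fin d → ℝ) : ℝ :=
  ∑ X, P p X * ∫ a, ∑ j, (a j - p j) ^ 2 ∂(M X)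

lemma upper {n d : ℕ} (M : (Fin n → Fin d → Bool) → Measure (Fin d → ℝ))
    (hM : ∀ x, IsProbabilityMeasure (M x)) (hc : ∀ x, ∀ᵐ a ∂(M x), a ∈ Cube d)
    {α ε δ : ℝ} (hα : 0 < α) (hε : 0 ≤ ε) (hε1 : ε ≤ 1) (hδ : 0 ≤ δ) (hdp : IsDP M ε δ)
    {p : Fin d → ℝ} (hp : p ∈ Cube d) (i : Fin n) :
    ∑ X, P p X * ∫ a, Z p (X i) a ∂(M X)
      ≤ 2 * ε * (err M p / (2 * α) + α / 2) + 2 * δ * d := by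
  let T : (Fin n → Fin d → Bool) → (Fin d → Bool) → ℝ := fun X y =>
    ∫ a, Z p y a ∂(M X) + 2 * ε * ∫ a, |Z p y a| ∂(M X) + 2 * δ * d
  have hdp' : ∀ X y, ∀ s : Set (Fin d → ℝ), MeasurableSet s →
      (M X s ≤ ENNReal.ofReal (Real.exp ε) * M (Function.update X i y) s + ENNReal.ofReal δ) ∧
      (M (Function.update X i y) s ≤ ENNReal.ofReal (Real.exp ε) * M X s + ENNReal.ofReal δ) := by
    intro X y s hs
    by_cases h : X i = y
    · have : Function.update X i y = X := by subst h; simp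
      rw [this, and_self]
      have h1 : (1 : ENNReal) ≤ ENNReal.ofReal (Real.exp ε) := by
        rw [← ENNReal.ofReal_one]; exact ENNReal.ofReal_le_ofReal (Real.one_le_exp hε)
      calc M X s = 1 * M X s := (one_mul _).symm
        _ ≤ ENNReal.ofReal (Real.exp ε) * M X s := by gcongr
        _ ≤ _ := le_self_add
    · refine ⟨hdp _ _ ⟨i, ?_, fun j hj => ?_⟩ s hs, hdp _ _ ⟨i, ?_, fun j hj => ?_⟩ s hs⟩
      · simpa using h
      · simp [hj]
      · simpa using Ne.symm h
      · simp [hj]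
  have step : ∀ X y, ∫ a, Z p (X i) a ∂(M X) ≤ T (Function.update X i y) (X i) := by
    intro X y
    have := hM X
    have := hM (Function.update X i y)
    exact dp_int (M X) (M (Function.update X i y)) hε hε1 hδ (Nat.cast_nonneg d)
      (fun s hs => (hdp' X y s hs).1) (fun s hs => (hdp' X y s hs).2) _ (Z_cont p (X i)).measurable
      ((hc _).mono fun a ha => Z_bound hp ha _) ((hc _).mono fun a ha => Z_bound hp ha _)
  have inner : ∀ X, ∑ y, Q p y * T X y
      ≤ 2 * ε * ((∫ a, ∑ j, (a j - p j) ^ 2 ∂(M X)) / (2 * α) + α / 2) + 2 * δ * d := by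
    intro X
    have := hM X
    have I : ∀ {f : (Fin d → ℝ) → ℝ}, Continuous f → Integrable f (M X) :=
      fun hf => integrable_of_cube _ (hc X) hf
    have cZ := Z_cont p
    have z1 : ∑ y, Q p y * ∫ a, Z p y a ∂(M X) = 0 := by
      simp only [← integral_const_mul]
      rw [← integral_finsetSum _ (fun y _ => (I (cZ y)).const_mul _)]
      simp [Q_Zsum]
    have z2 : ∑ y, Q p y * ∫ a, |Z p y a| ∂(M X)
        ≤ (∫ a, ∑ j, (a j - p j) ^ 2 ∂(M X)) / (2 * α) + α / 2 := by
      simp only [← integral_const_mul]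
      rw [← integral_finsetSum _ (fun y _ => (I (cZ y).abs).const_mul _)]
      have i2 : Integrable (fun a : Fin d → ℝ => ∑ j, (a j - p j) ^ 2) (M X) := I (by fun_prop)
      have : (∫ a, ∑ j, (a j - p j) ^ 2 ∂(M X)) / (2 * α) + α / 2
          = ∫ a, ((∑ j, (a j - p j) ^ 2) / (2 * α) + α / 2) ∂(M X) := by
        rw [integral_add (i2.div_const _) (integrable_const _), integral_div]
        simp
      rw [this]
      refine integral_mono (I (continuous_finsetSum _ fun y _ => ((cZ y).abs.const_mul _)))
        ((i2.div_const _).add (integrable_const _)) fun a => ?_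
      calc ∑ y, Q p y * |Z p y a|
          ≤ ∑ y, Q p y * (Z p y a ^ 2 / (2 * α) + α / 2) := by
            refine Finset.sum_le_sum fun y _ => mul_le_mul_of_nonneg_left ?_ (Q_nonneg hp y)
            rw [← sq_abs]
            have : |Z p y a| ^ 2 / (2 * α) + α / 2 - |Z p y a| = (|Z p y a| - α) ^ 2 / (2 * α) := by
              field_simp; ring
            have h2 : 0 ≤ (|Z p y a| - α) ^ 2 / (2 * α) := by positivity
            linarith
        _ = (∑ y, Q p y * Z p y a ^ 2) / (2 * α) + α / 2 := by
            simp only [mul_add, Finset.sum_add_distrib]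
            rw [← Finset.sum_mul, Q_sum, one_mul, Finset.sum_div]
            simp only [mul_div_assoc]
        _ ≤ _ := by
            have := Q_Zsq p a hp
            gcongr
    have : ∑ y, Q p y * T X y = ∑ y, Q p y * ∫ a, Z p y a ∂(M X)
        + 2 * ε * ∑ y, Q p y * ∫ a, |Z p y a| ∂(M X) + 2 * δ * d := by
      simp only [T, mul_add, Finset.sum_add_distrib, ← Finset.sum_mul, Q_sum, one_mul,
        Finset.mul_sum]
      congr 2
      exact Finset.sum_congr rfl fun y _ => by ring
    rw [this, z1]
    have := mul_le_mul_of_nonneg_left z2 (show 0 ≤ 2 * ε by positivity)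
    linarith
  calc ∑ X, P p X * ∫ a, Z p (X i) a ∂(M X)
      = ∑ X, ∑ y, P p X * Q p y * ∫ a, Z p (X i) a ∂(M X) := by
        refine Finset.sum_congr rfl fun X _ => ?_
        rw [← Finset.sum_mul, ← Finset.mul_sum, Q_sum, mul_one]
    _ ≤ ∑ X, ∑ y, P p X * Q p y * T (Function.update X i y) (X i) := by
        refine Finset.sum_le_sum fun X _ => Finset.sum_le_sum fun y _ => ?_
        exact mul_le_mul_of_nonneg_left (step X y) (mul_nonneg (P_nonneg hp X) (Q_nonneg hp y))
    _ = ∑ X, P p X * ∑ y, Q p y * T X y := by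
        rw [swap]
        simp only [Finset.mul_sum, mul_assoc]
    _ ≤ ∑ X, P p X * (2 * ε * ((∫ a, ∑ j, (a j - p j) ^ 2 ∂(M X)) / (2 * α) + α / 2)
          + 2 * δ * d) :=
        Finset.sum_le_sum fun X _ => mul_le_mul_of_nonneg_left (inner X) (P_nonneg hp X)
    _ = _ := by
        have e : ∀ X : Fin n → Fin d → Bool, P p X * (2 * ε * ((∫ a, ∑ j, (a j - p j) ^ 2 ∂(M X)) / (2 * α) + α / 2)
          + 2 * δ * d) = 2 * ε / (2 * α) * (P p X * ∫ a, ∑ j, (a j - p j) ^ 2 ∂(M X))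
            + P p X * (ε * α + 2 * δ * d) := by intro X; ring
        simp only [e, Finset.sum_add_distrib, ← Finset.mul_sum, ← Finset.sum_mul, P_sum, err]
        ring

lemma P_mean {n d : ℕ} (p : Fin d → ℝ) (i : Fin n) (j : Fin d) :
    ∑ X : Fin n → Fin d → Bool, P p X * (vB (X i j) - p j) = 0 := by
  have := swap p i (fun _ y => vB (y j) - p j)
  have e1 : ∀ X : Fin n → Fin d → Bool, ∑ y, P p X * Q p y * (vB (X i j) - p j)
      = P p X * (vB (X i j) - p j) := by
    intro X; rw [← Finset.sum_mul, ← Finset.mul_sum, Q_sum, mul_one]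
  simp only [e1] at this
  rw [this]
  simp only [mul_assoc, ← Finset.mul_sum, Q_mean, mul_zero, Finset.sum_const_zero]

lemma P_cont {n d : ℕ} (X : Fin n → Fin d → Bool) : Continuous fun p : Fin d → ℝ => P p X := by
  unfold P Q
  exact continuous_finsetProd _ fun i _ => continuous_finsetProd _ fun j _ =>
    (bR_cont (X i j)).comp (continuous_apply j)

lemma ph_cont : Continuous ph := by unfold ph; fun_prop
lemma hh_cont : Continuous hh := by unfold hh; fun_prop

section
variable {n d : ℕ} (M : (Fin n → Fin d → Bool) → Measure (Fin d → ℝ))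

lemma S_eq (hM : ∀ x, IsProbabilityMeasure (M x)) (hc : ∀ x, ∀ᵐ a ∂(M x), a ∈ Cube d)
    (p : Fin d → ℝ) :
    ∑ i, ∑ X, P p X * ∫ a, Z p (X i) a ∂(M X)
      = ∑ X, ∑ j, (∫ a, a j ∂(M X)) * (P p X * (ph (p j) * ∑ i, (vB (X i j) - p j))) := by
  have hZ : ∀ X y, ∫ a, Z p y a ∂(M X)
      = ∑ j, ph (p j) * ((∫ a, a j ∂(M X)) - p j) * (vB (y j) - p j) := by
    intro X y
    have := hM X
    have I : ∀ {f : (Fin d → ℝ) → ℝ}, Continuous f → Integrable f (M X) :=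
      fun hf => integrable_of_cube _ (hc X) hf
    unfold Z
    rw [integral_finsetSum _ fun j _ => I (by fun_prop)]
    refine Finset.sum_congr rfl fun j _ => ?_
    rw [integral_mul_const, integral_const_mul, integral_sub (I (by fun_prop)) (I (by fun_prop))]
    simp
  simp only [hZ]
  have e : ∀ i : Fin n, ∑ X, P p X * ∑ j, ph (p j) * ((∫ a, a j ∂(M X)) - p j) * (vB (X i j) - p j)
      = ∑ X, ∑ j, (∫ a, a j ∂(M X)) * (P p X * (ph (p j) * (vB (X i j) - p j))) := by
    intro i
    simp only [Finset.mul_sum]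
    rw [Finset.sum_comm, Finset.sum_comm (s := Finset.univ (α := Fin n → Fin d → Bool))]
    refine Finset.sum_congr rfl fun j _ => ?_
    have e2 : ∀ X : Fin n → Fin d → Bool,
        P p X * (ph (p j) * ((∫ a, a j ∂(M X)) - p j) * (vB (X i j) - p j))
        = (∫ a, a j ∂(M X)) * (P p X * (ph (p j) * (vB (X i j) - p j)))
          - ph (p j) * p j * (P p X * (vB (X i j) - p j)) := by intro X; ring
    simp only [e2, Finset.sum_sub_distrib, ← Finset.mul_sum, P_mean, mul_zero, sub_zero]
  simp only [e]
  rw [Finset.sum_comm]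
  refine Finset.sum_congr rfl fun X _ => ?_
  rw [Finset.sum_comm]
  refine Finset.sum_congr rfl fun j _ => ?_
  simp only [Finset.mul_sum]

lemma err_cont (hM : ∀ x, IsProbabilityMeasure (M x)) (hc : ∀ x, ∀ᵐ a ∂(M x), a ∈ Cube d) :
    Continuous (err M) := by
  unfold err
  refine continuous_finsetSum _ fun X _ => (P_cont X).mul ?_
  have := hM X
  have I : ∀ {f : (Fin d → ℝ) → ℝ}, Continuous f → Integrable f (M X) :=
      fun hf => integrable_of_cube _ (hc X) hf
  have : (fun p : Fin d → ℝ => ∫ a, ∑ j, (a j - p j) ^ 2 ∂(M X))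
      = fun p => ∑ j, ((∫ a, (a j) ^ 2 ∂(M X)) - 2 * p j * (∫ a, a j ∂(M X)) + p j ^ 2) := by
    ext p
    rw [integral_finsetSum _ fun j _ => I (by fun_prop)]
    refine Finset.sum_congr rfl fun j _ => ?_
    have : ∀ a : Fin d → ℝ, (a j - p j) ^ 2 = (a j) ^ 2 - 2 * p j * a j + p j ^ 2 := by
      intro a; ring
    simp only [this]
    rw [integral_add (I (by fun_prop)) (I (by fun_prop)),
      integral_sub (I (by fun_prop)) (I (by fun_prop)), integral_const_mul]
    simp
  rw [this]
  fun_prop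

lemma lower_pt (hM : ∀ x, IsProbabilityMeasure (M x)) (hc : ∀ x, ∀ᵐ a ∂(M x), a ∈ Cube d)
    {p : Fin d → ℝ} (hp : p ∈ Cube d) :
    ∑ j, (hh (p j) / 2 + (2 * p j - 1) ^ 2 / 12) - err M p
      ≤ ∑ X, ∑ j, (∫ a, a j ∂(M X)) * (P p X * hh (p j)) := by
  have h1 : ∀ X, ∑ j, (hh (p j) / 2 + (2 * p j - 1) ^ 2 / 12)
      - ∫ a, ∑ j, (a j - p j) ^ 2 ∂(M X) ≤ ∑ j, (∫ a, a j ∂(M X)) * hh (p j) := by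
    intro X
    have := hM X
    have I : ∀ {f : (Fin d → ℝ) → ℝ}, Continuous f → Integrable f (M X) :=
      fun hf => integrable_of_cube _ (hc X) hf
    rw [integral_finsetSum _ fun j _ => I (by fun_prop), ← Finset.sum_sub_distrib]
    refine Finset.sum_le_sum fun j _ => ?_
    rw [← integral_mul_const]
    have : hh (p j) / 2 + (2 * p j - 1) ^ 2 / 12 - ∫ a, (a j - p j) ^ 2 ∂(M X)
        = ∫ a, (hh (p j) / 2 + (2 * p j - 1) ^ 2 / 12 - (a j - p j) ^ 2) ∂(M X) := by
      rw [integral_sub (I (by fun_prop)) (I (by fun_prop))]; simp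
    rw [this]
    refine integral_mono (I (by fun_prop)) (I (by fun_prop)) fun a => ?_
    obtain ⟨g1, g2⟩ := hp j
    simp only
    generalize a j = b
    obtain ⟨s, hs⟩ : ∃ s, s = 2 * p j - 1 := ⟨_, rfl⟩
    have hpj : p j = (1 + s) / 2 := by linarith
    have s2 : s ^ 2 ≤ 1 / 9 := by nlinarith
    unfold hh
    rw [← hs, hpj]
    obtain ⟨k, hk⟩ : ∃ k, k = 5 / 18 - s ^ 2 / 2 := ⟨_, rfl⟩
    rw [← hk]
    have k1 : 2 / 9 ≤ k := by linarith
    have k2 : k ≤ 5 / 18 := by nlinarith [sq_nonneg s]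
    have k3 : 0 ≤ k / 2 - 1 / 12 - k ^ 2 / 4 := by nlinarith
    nlinarith [sq_nonneg (b - (1 + s) / 2 + s * k / 2), mul_nonneg k3 (sq_nonneg s)]
  have h2 := Finset.sum_le_sum fun X (_ : X ∈ Finset.univ) =>
    mul_le_mul_of_nonneg_left (h1 X) (P_nonneg hp X)
  simp only [mul_sub, Finset.sum_sub_distrib] at h2
  rw [← Finset.sum_mul, P_sum, one_mul] at h2
  refine h2.trans (le_of_eq ?_)
  refine Finset.sum_congr rfl fun X _ => ?_
  rw [Finset.mul_sum]
  exact Finset.sum_congr rfl fun j _ => by ring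

lemma int_coord (j : Fin d) (u : ℝ → ℝ) (hu : Continuous u) :
    ∫ p, u (p j) ∂(DD d) = ∫ t, u t ∂muU := by
  have h := (measurePreserving_eval (fun _ : Fin d => muU) j)
  have h2 := integral_map (μ := DD d) (φ := Function.eval j) (f := u)
    h.measurable.aemeasurable hu.aestronglyMeasurable
  rw [show Measure.map (Function.eval j) (DD d) = muU from h.map_eq] at h2
  exact h2.symm

lemma int_base : ∫ t, (hh t / 2 + (2 * t - 1) ^ 2 / 12) ∂muU = 1 / 324 := by
  rw [muU_integral]
  have hd : ∀ t ∈ uIcc (1/3:ℝ) (2/3), HasDerivAt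
      (fun t : ℝ => 5 / 144 * (2 * t - 1) ^ 2 - (2 * t - 1) ^ 4 / 32 + (2 * t - 1) ^ 3 / 72)
      (hh t / 2 + (2 * t - 1) ^ 2 / 12) t := by
    intro t _
    have h := ((hasDerivAt_id t).const_mul 2).sub_const 1
    refine ((((h.pow 2).const_mul (5/144)).sub ((h.pow 4).div_const 32)).add
      ((h.pow 3).div_const 72)).congr_deriv ?_
    simp [hh]; ring
  rw [intervalIntegral.integral_eq_sub_of_hasDerivAt hd]
  · norm_num
  · exact Continuous.intervalIntegrable (by unfold hh; fun_prop) _ _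

lemma final (hM : ∀ x, IsProbabilityMeasure (M x)) (hc : ∀ x, ∀ᵐ a ∂(M x), a ∈ Cube d)
    {α ε δ : ℝ} (hα : 0 < α) (hε : 0 ≤ ε) (hε1 : ε ≤ 1) (hδ : 0 ≤ δ) (hdp : IsDP M ε δ)
    (herr : ∫ p, err M p ∂(DD d) ≤ α ^ 2) :
    d / 324 - α ^ 2 ≤ n * (2 * ε * α + 2 * δ * d) := by
  have hh_c := hh_cont
  have ph_c := ph_cont
  have ec := err_cont M hM hc
  have Pc := P_cont (n := n) (d := d)
  have low : ∫ p, (∑ j, (hh (p j) / 2 + (2 * p j - 1) ^ 2 / 12) - err M p) ∂(DD d)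
      = d / 324 - ∫ p, err M p ∂(DD d) := by
    rw [integral_sub (DD_integrable (by fun_prop)) (DD_integrable ec),
      integral_finsetSum _ fun j _ => DD_integrable (by fun_prop)]
    have : ∀ j : Fin d, ∫ p, (hh (p j) / 2 + (2 * p j - 1) ^ 2 / 12) ∂(DD d) = 1 / 324 := fun j => by
      rw [int_coord j (fun t => hh t / 2 + (2 * t - 1) ^ 2 / 12) (by fun_prop), int_base]
    simp only [this]
    simp; ring
  have mid : ∫ p, ∑ X, ∑ j, (∫ a, a j ∂(M X)) * (P p X * hh (p j)) ∂(DD d)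
      = ∫ p, ∑ X, ∑ j, (∫ a, a j ∂(M X)) * (P p X * (ph (p j) * ∑ i, (vB (X i j) - p j)))
        ∂(DD d) := by
    rw [integral_finsetSum _ fun X _ => DD_integrable (by fun_prop),
      integral_finsetSum _ fun X _ => DD_integrable (by fun_prop)]
    refine Finset.sum_congr rfl fun X _ => ?_
    rw [integral_finsetSum _ fun X _ => DD_integrable (by fun_prop),
      integral_finsetSum _ fun X _ => DD_integrable (by fun_prop)]
    refine Finset.sum_congr rfl fun j _ => ?_
    rw [integral_const_mul, integral_const_mul, partsD]
  have l1 := integral_mono_ae (μ := DD d) (DD_integrable (by fun_prop)) (DD_integrable (by fun_prop))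
    ((DD_ae d).mono fun p hp => lower_pt M hM hc hp)
  have u1 := integral_mono_ae (μ := DD d)
    (f := fun p => ∑ X, ∑ j, (∫ a, a j ∂(M X)) * (P p X * (ph (p j) * ∑ i, (vB (X i j) - p j))))
    (g := fun p => n * (2 * ε * (err M p / (2 * α) + α / 2) + 2 * δ * d))
    (DD_integrable (by fun_prop)) (DD_integrable (by fun_prop))
    ((DD_ae d).mono fun p hp => by
      simp only
      rw [← S_eq M hM hc]
      simpa [mul_add] using Finset.sum_le_sum fun i (_ : i ∈ Finset.univ) =>
        upper M hM hc hα hε hε1 hδ hdp hp i)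
  have u2 : ∫ p, (n * (2 * ε * (err M p / (2 * α) + α / 2) + 2 * δ * d)) ∂(DD d)
      = n * (2 * ε * ((∫ p, err M p ∂(DD d)) / (2 * α) + α / 2) + 2 * δ * d) := by
    rw [integral_const_mul, integral_add (DD_integrable (by fun_prop)) (DD_integrable (by fun_prop)),
      integral_const_mul, integral_add (DD_integrable (by fun_prop)) (DD_integrable (by fun_prop)),
      integral_div]
    simp
  rw [low, mid] at l1
  rw [u2] at u1
  have u3 : (∫ p, err M p ∂(DD d)) / (2 * α) + α / 2 ≤ α := by
    have : (∫ p, err M p ∂(DD d)) / (2 * α) ≤ α / 2 := by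
      rw [div_le_iff₀ (by positivity)]; nlinarith
    linarith
  have u4 : n * (2 * ε * ((∫ p, err M p ∂(DD d)) / (2 * α) + α / 2) + 2 * δ * d)
      ≤ n * (2 * ε * α + 2 * δ * d) := by gcongr
  linarith
end

end PBM

/-- **Lower bound for private mean estimation of binary product distributions.**
There is a prior `D` on mean vectors `p ∈ [1/3, 2/3]^d` and universal constants
`c₁, c₂, c₃ > 0` such that any `(ε,δ)`-DP mechanism (with `ε, δ ∈ [0,1]`,
`δ ≤ c₂/n`) whose mean-squared `ℓ₂` error on `n` i.i.d. samples from the product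
Bernoulli distribution with mean `p` is at most `α²` with `0 < α ≤ c₁√d` must have
`n ≥ c₃·d/(αε)`. -/
theorem private_product_bernoulli_mean_lower_bound :
    ∃ c₁ c₂ c₃ : ℝ, 0 < c₁ ∧ 0 < c₂ ∧ 0 < c₃ ∧
      ∀ d : ℕ, 0 < d →
        ∃ D : Measure (Fin d → ℝ), IsProbabilityMeasure D ∧
          (∀ᵐ p ∂D, ∀ j, p j ∈ Icc ((1 : ℝ) / 3) ((2 : ℝ) / 3)) ∧
          ∀ n : ℕ, ∀ α ε δ : ℝ,
            0 < α → α ≤ c₁ * Real.sqrt d → 0 ≤ ε → ε ≤ 1 → 0 ≤ δ → δ ≤ 1 →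
            δ ≤ c₂ / (n : ℝ) →
            ∀ M : (Fin n → Fin d → Bool) → Measure (Fin d → ℝ),
              (∀ x, IsProbabilityMeasure (M x)) →
              IsDP M ε δ →
              (∀ x, ∀ᵐ a ∂(M x), ∀ j, a j ∈ Icc ((1 : ℝ) / 3) ((2 : ℝ) / 3)) →
              (∫ p, ∫ X, ∫ a, (∑ j, (a j - p j) ^ 2)
                  ∂(M X) ∂(Measure.pi fun _ : Fin n => prodBernoulli p) ∂D) ≤ α ^ 2 →
              c₃ * (d : ℝ) / (α * ε) ≤ (n : ℝ) := by
  refine ⟨1/36, 1/1728, 1/1728, by norm_num, by norm_num, by norm_num, fun d hd =>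
    ⟨PBM.DD d, inferInstance, PBM.DD_ae d, ?_⟩⟩
  intro n α ε δ hα hα1 hε hε1 hδ _ hδn M hM hdp hc herr
  have e : (∫ p, ∫ X, ∫ a, (∑ j, (a j - p j) ^ 2)
      ∂(M X) ∂(Measure.pi fun _ : Fin n => prodBernoulli p) ∂(PBM.DD d))
      = ∫ p, PBM.err M p ∂(PBM.DD d) :=
    integral_congr_ae ((PBM.DD_ae d).mono fun p hp => PBM.conv hp _)
  rw [e] at herr
  have key := PBM.final M hM hc hα hε hε1 hδ hdp herr
  have hn : (n : ℝ) * δ ≤ 1 / 1728 := by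
    rcases Nat.eq_zero_or_pos n with h | h
    · subst h; norm_num
    · have h' : (0:ℝ) < n := by exact_mod_cast h
      rw [le_div_iff₀ h'] at hδn
      linarith
  have hd' : (0:ℝ) < d := by exact_mod_cast hd
  have ha : α ^ 2 ≤ d / 1296 := by
    have h1 := Real.sq_sqrt hd'.le
    have h2 : 0 ≤ Real.sqrt d := Real.sqrt_nonneg _
    nlinarith
  have h3 : (n : ℝ) * δ * d ≤ 1 / 1728 * d := by gcongr
  have h4 : 1 / 1728 * (d : ℝ) ≤ n * (α * ε) := by nlinarith
  rcases hε.eq_or_lt with h | h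
  · subst h; simp
  · rw [div_le_iff₀ (by positivity)]; exact h4
end
end
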